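/- Let 𝒴 be a finite nonempty set, d ≥ 1, and 𝒳 = ℝ^d. Let H be the class of rectangular set-valued predictors: for each h ∈ H and y ∈ 𝒴, h_y(x) = 𝟙[x ∈ R_y] for some axis-aligned closed box R_y ⊆ ℝ^d, and h(x) = {y : h_y(x) = 1}. Then for every γ ∈ (0,1) and every n ∈ ℕ there exists a set of n domains (probability measures on ℝ^d × 𝒴 giving positive mass to each label) that is shattered by H with respect to L_recall and γ. -/

import Mathlib

open MeasureTheory Set ProbabilityTheory
open scoped ENNReal

/-- The recall loss `L_recall(h, P) = max_{y ∈ 𝒴} P(y ∉ h(X) | Y = y)`. -/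
noncomputable def recallLoss {𝒳 𝒴 : Type*} [MeasurableSpace 𝒳] [MeasurableSpace 𝒴]
    [Fintype 𝒴] [Nonempty 𝒴] (h : 𝒳 → Set 𝒴) (P : Measure (𝒳 × 𝒴)) : ℝ :=
  Finset.univ.sup' Finset.univ_nonempty fun y : 𝒴 =>
    ((P[|{p : 𝒳 × 𝒴 | p.2 = y}]) {p : 𝒳 × 𝒴 | y ∉ h p.1}).toReal

/-!
Only boxes shared by all labels are needed: if the label is independent of `X`, the recall loss of
such a predictor is the probability that `X` misses the box. On a chain of `2 * M + 2` points, the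
window `Icc k (k + M + 1)` with `k < M` contains exactly one of the points `j` and `j + M + 1` for
each `j < M` other than `k`, and both of them for `j = k`. A measure giving the two points of each
pair equal weight `w j` therefore has miss probability `γ - w k` on the `k`-th window, once the
remaining mass is split suitably between a point in all windows and a point in none. So whether the
`k`-th window reaches the threshold `γ` is decided by `w k` alone, and one window can be reserved
for each subset of the domains.
-/

section Shatters

/-- A family `P` of domains is shattered by the hypotheses `𝓗` with respect to the loss `L` and the
threshold `γ`. Indexing the domains spares a separate proof that they are distinct, see
`Shatters.injective`. -/
def Shatters {𝓗 𝓓 ι R : Type*} [LE R] (L : 𝓗 → 𝓓 → R) (γ : R) (P : ι → 𝓓) : Prop :=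
  ∀ S : Set ι, ∃ h, ∀ i, γ ≤ L h (P i) ↔ i ∈ S

variable {𝓗 𝓗' 𝓓 𝓓' ι R R' : Type*}

lemma Shatters.injective [LE R] {L : 𝓗 → 𝓓 → R} {γ : R} {P : ι → 𝓓} (hP : Shatters L γ P) :
    Function.Injective P := by
  intro i j hij
  obtain ⟨h, hh⟩ := hP {j}
  rw [← mem_singleton_iff, ← hh i, hij, hh j, mem_singleton_iff]

lemma Shatters.transfer [LE R] [LE R'] {L : 𝓗 → 𝓓 → R} {L' : 𝓗' → 𝓓' → R'} {γ : R} {γ' : R'}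
    {P : ι → 𝓓} {P' : ι → 𝓓'} (hP : Shatters L γ P) (f : 𝓗 → 𝓗')
    (hf : ∀ h i, γ' ≤ L' (f h) (P' i) ↔ γ ≤ L h (P i)) : Shatters L' γ' P' := by
  intro S
  obtain ⟨h, hh⟩ := hP S
  exact ⟨f h, fun i => (hf h i).trans (hh i)⟩

lemma Shatters.exists_forall_mem_le_forall_notMem_lt [LinearOrder R] {L : 𝓗 → 𝓓 → R} {γ : R}
    {P : ι → 𝓓} (hP : Shatters L γ P) {C : Set 𝓓} (hC : C ⊆ range P) :
    ∃ h, (∀ Q ∈ C, γ ≤ L h Q) ∧ ∀ Q ∈ range P, Q ∉ C → L h Q < γ := by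
  obtain ⟨h, hh⟩ := hP (P ⁻¹' C)
  refine ⟨h, fun Q hQ => ?_, ?_⟩
  · obtain ⟨i, rfl⟩ := hC hQ
    exact (hh i).2 hQ
  · rintro _ ⟨i, rfl⟩ hi
    exact not_le.1 (mt (hh i).1 hi)

end Shatters

section SlidingWindow

variable {M : ℕ}

/-- The measure on `{0, …, 2M + 1}` with weight `w j` at both `j` and `j + M + 1`, whose remaining
mass is divided between `M`, which lies in all windows `Icc k (k + M + 1)` with `k < M`, and
`2M + 1`, which lies in none of them. The subtractions are truncated; they are meaningful when
`∑ j, w j` is at most `γ` and `1 - γ`. -/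
noncomputable def slidingMeasure (w : Fin M → ℝ≥0∞) (γ : ℝ≥0∞) : Measure ℕ :=
  ∑ j, w j • (Measure.dirac (j : ℕ) + Measure.dirac (j + M + 1)) +
    ((1 - γ - ∑ j, w j) • Measure.dirac M + (γ - ∑ j, w j) • Measure.dirac (2 * M + 1))

lemma slidingMeasure_apply (w : Fin M → ℝ≥0∞) (γ : ℝ≥0∞) (B : Set ℕ) :
    slidingMeasure w γ B =
      ∑ j, w j * (B.indicator 1 (j : ℕ) + B.indicator 1 (j + M + 1)) +
        ((1 - γ - ∑ j, w j) * B.indicator 1 M + (γ - ∑ j, w j) * B.indicator 1 (2 * M + 1)) := by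
  simp only [slidingMeasure, Measure.add_apply, Measure.finsetSum_apply, Measure.smul_apply,
    Measure.dirac_apply, smul_eq_mul]

lemma isProbabilityMeasure_slidingMeasure {w : Fin M → ℝ≥0∞} {γ : ℝ≥0∞} (hγ : γ ≤ 1)
    (hw : ∑ j, w j ≤ γ) (hw' : ∑ j, w j ≤ 1 - γ) :
    IsProbabilityMeasure (slidingMeasure w γ) := by
  refine ⟨?_⟩
  simp only [slidingMeasure_apply, indicator_univ, Pi.one_apply, mul_one, mul_add,
    Finset.sum_add_distrib]
  calc ∑ j, w j + ∑ j, w j + (1 - γ - ∑ j, w j + (γ - ∑ j, w j))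
      = (1 - γ - ∑ j, w j + ∑ j, w j) + (γ - ∑ j, w j + ∑ j, w j) := by ring
    _ = 1 := by rw [tsub_add_cancel_of_le hw', tsub_add_cancel_of_le hw, tsub_add_cancel_of_le hγ]

lemma indicator_compl_window_pair (j k : Fin M) :
    ((Icc (k : ℕ) (k + M + 1))ᶜ.indicator 1 (j : ℕ) +
      (Icc (k : ℕ) (k + M + 1))ᶜ.indicator 1 (j + M + 1) : ℝ≥0∞) = if j = k then 0 else 1 := by
  have hj := j.isLt
  have hk := k.isLt
  simp only [indicator_apply, mem_compl_iff, mem_Icc, Pi.one_apply]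
  rcases lt_trichotomy j k with h | rfl | h
  · rw [if_pos (by lia), if_neg (by lia), if_neg h.ne, add_zero]
  · rw [if_neg (by lia), if_neg (by lia), if_pos rfl, add_zero]
  · rw [if_neg (by lia), if_pos (by lia), if_neg h.ne', zero_add]

lemma slidingMeasure_compl_window_add {w : Fin M → ℝ≥0∞} {γ : ℝ≥0∞} (hw : ∑ j, w j ≤ γ)
    (k : Fin M) : slidingMeasure w γ (Icc (k : ℕ) (k + M + 1))ᶜ + w k = γ := by
  have hk := k.isLt
  have h_center : M ∉ (Icc (k : ℕ) (k + M + 1))ᶜ := by simp only [mem_compl_iff, mem_Icc]; lia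
  have h_outside : 2 * M + 1 ∈ (Icc (k : ℕ) (k + M + 1))ᶜ := by
    simp only [mem_compl_iff, mem_Icc]; lia
  have h_pairs : ∑ j, w j * (if j = k then 0 else 1) + w k = ∑ j, w j := by
    rw [← Fintype.sum_ite_eq' k w, ← Finset.sum_add_distrib]
    exact Finset.sum_congr rfl fun j _ => by split_ifs <;> simp
  simp only [slidingMeasure_apply, indicator_compl_window_pair, indicator_of_notMem h_center,
    indicator_of_mem h_outside, Pi.one_apply, mul_zero, mul_one, zero_add]
  rw [add_right_comm, h_pairs, add_tsub_cancel_of_le hw]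

lemma le_slidingMeasure_compl_window_iff {w : Fin M → ℝ≥0∞} {γ : ℝ≥0∞} (hγ : γ ≠ ∞)
    (hw : ∑ j, w j ≤ γ) (k : Fin M) :
    γ ≤ slidingMeasure w γ (Icc (k : ℕ) (k + M + 1))ᶜ ↔ w k = 0 := by
  have h_add := slidingMeasure_compl_window_add hw k
  refine ⟨fun h_le => ?_, fun h_zero => ?_⟩
  · by_contra h_ne
    have h_fin : slidingMeasure w γ (Icc (k : ℕ) (k + M + 1))ᶜ ≠ ∞ :=
      ne_top_of_le_ne_top hγ (le_self_add.trans_eq h_add)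
    exact (ENNReal.lt_add_right h_fin h_ne).not_ge (h_add.trans_le h_le)
  · rw [h_zero, add_zero] at h_add
    exact h_add.ge

end SlidingWindow

section MissProb

/-- The probability that a `μ`-random point lies outside the interval with endpoints `I`. In `ℝ^d`
with its product order, these intervals are the axis-aligned closed boxes. -/
def missProb {X : Type*} [Preorder X] [MeasurableSpace X] (I : X × X) (μ : Measure X) : ℝ≥0∞ :=
  μ (Icc I.1 I.2)ᶜ

lemma missProb_map {X Y : Type*} [Preorder X] [MeasurableSpace X] [Preorder Y] [MeasurableSpace Y]
    (e : X ↪o Y) (he : Measurable e) (hIcc : ∀ l u : Y, MeasurableSet (Icc l u)) (I : X × X)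
    (μ : Measure X) : missProb (I.map e e) (μ.map e) = missProb I μ := by
  rw [missProb, Measure.map_apply he (hIcc _ _).compl, preimage_compl, Prod.map_fst, Prod.map_snd,
    e.preimage_Icc, missProb]

lemma exists_probabilityMeasure_nat_le_missProb_iff {ι : Type*} {M : ℕ} (A : Fin M → Set ι)
    {γ : ℝ≥0∞} (hγ : γ ∈ Ioo 0 1) :
    ∃ μ : ι → Measure ℕ, (∀ i, IsProbabilityMeasure (μ i)) ∧
      ∀ k, ∃ I, ∀ i, γ ≤ missProb I (μ i) ↔ i ∈ A k := by
  classical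
  let c : ℝ≥0∞ := min γ (1 - γ) / M
  let w (i : ι) (k : Fin M) : ℝ≥0∞ := if i ∈ A k then 0 else c
  have hc : c ≠ 0 :=
    (ENNReal.div_pos (lt_min hγ.1 (tsub_pos_of_lt hγ.2)).ne' (ENNReal.natCast_ne_top M)).ne'
  have hw (i : ι) : ∑ k, w i k ≤ min γ (1 - γ) :=
    calc ∑ k, w i k ≤ ∑ _k : Fin M, c := Finset.sum_le_sum fun k _ => by
          simp only [w]; split_ifs <;> simp
      _ = M * c := by simp
      _ ≤ min γ (1 - γ) := ENNReal.mul_div_le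
  refine ⟨fun i => slidingMeasure (w i) γ, fun i => ?_, fun k => ⟨(k, k + M + 1), fun i => ?_⟩⟩
  · exact isProbabilityMeasure_slidingMeasure hγ.2.le ((hw i).trans (min_le_left _ _))
      ((hw i).trans (min_le_right _ _))
  · exact (le_slidingMeasure_compl_window_iff hγ.2.ne_top ((hw i).trans (min_le_left _ _)) k).trans
      (by simp [w, hc])

lemma exists_shatters_missProb_nat (ι : Type*) [Finite ι] {γ : ℝ≥0∞} (hγ : γ ∈ Ioo 0 1) :
    ∃ μ : ι → Measure ℕ, (∀ i, IsProbabilityMeasure (μ i)) ∧ Shatters missProb γ μ := by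
  let subsets := (Finite.equivFin (Set ι)).symm
  obtain ⟨μ, hμ, h⟩ := exists_probabilityMeasure_nat_le_missProb_iff subsets hγ
  exact ⟨μ, hμ, subsets.surjective.forall.2 h⟩

lemma exists_shatters_missProb (ι : Type*) [Finite ι] {X : Type*} [Preorder X] [MeasurableSpace X]
    (hIcc : ∀ l u : X, MeasurableSet (Icc l u)) (e : ℕ ↪o X) {γ : ℝ≥0∞} (hγ : γ ∈ Ioo 0 1) :
    ∃ μ : ι → Measure X, (∀ i, IsProbabilityMeasure (μ i)) ∧ Shatters missProb γ μ := by
  obtain ⟨μ, hμ, hsh⟩ := exists_shatters_missProb_nat ι hγ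
  have he : Measurable e := measurable_from_nat
  refine ⟨fun i => (μ i).map e, fun i => Measure.isProbabilityMeasure_map he.aemeasurable,
    hsh.transfer (Prod.map e e) fun I i => ?_⟩
  rw [missProb_map e he hIcc]

end MissProb

section Labels

variable {𝒳 𝒴 : Type*} [MeasurableSpace 𝒳] [MeasurableSpace 𝒴]

lemma exists_probabilityMeasure_singleton_pos (𝒴 : Type*) [Finite 𝒴] [Nonempty 𝒴]
    [MeasurableSpace 𝒴] : ∃ κ : Measure 𝒴, IsProbabilityMeasure κ ∧ ∀ y, 0 < κ {y} := by
  cases nonempty_fintype 𝒴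
  let p := PMF.uniformOfFintype 𝒴
  refine ⟨p.toMeasure, inferInstance, fun y => ?_⟩
  -- `{y}` need not be measurable, so `PMF.toMeasure_apply_singleton` does not apply.
  calc 0 < p y := (p.apply_pos_iff y).2 (PMF.mem_support_uniformOfFintype y)
    _ = p.toOuterMeasure {y} := (p.toOuterMeasure_apply_singleton y).symm
    _ ≤ p.toMeasure {y} := p.toOuterMeasure_apply_le_toMeasure_apply {y}

lemma prod_apply_snd_eq (μ : Measure 𝒳) [IsProbabilityMeasure μ] (κ : Measure 𝒴) [SFinite κ]
    (y : 𝒴) : μ.prod κ {p | p.2 = y} = κ {y} := by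
  have h_prod : {p : 𝒳 × 𝒴 | p.2 = y} = univ ×ˢ {y} := by ext p; simp
  rw [h_prod, Measure.prod_prod, measure_univ, one_mul]

lemma cond_prod_snd_eq_apply (μ : Measure 𝒳) [IsProbabilityMeasure μ] (κ : Measure 𝒴)
    [IsFiniteMeasure κ] {y : 𝒴} (hy : κ {y} ≠ 0) {A : Set 𝒳} (hA : MeasurableSet A) :
    (μ.prod κ)[|{p | p.2 = y}] {p | p.1 ∈ A} = μ A := by
  have h_inter : {p : 𝒳 × 𝒴 | p.2 = y} ∩ {p | p.1 ∈ A} = A ×ˢ {y} := by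
    ext p; simp [and_comm]
  have h_meas : MeasurableSet {p : 𝒳 × 𝒴 | p.1 ∈ A} := measurable_fst hA
  rw [cond_apply' h_meas, h_inter, prod_apply_snd_eq, Measure.prod_prod,
    mul_comm (μ A), ← mul_assoc, ENNReal.inv_mul_cancel hy (measure_ne_top κ _), one_mul]

lemma recallLoss_prod_of_forall_label [Fintype 𝒴] [Nonempty 𝒴] (μ : Measure 𝒳)
    [IsProbabilityMeasure μ] (κ : Measure 𝒴) [IsFiniteMeasure κ] (hκ : ∀ y, κ {y} ≠ 0)
    {B : Set 𝒳} (hB : MeasurableSet B) :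
    recallLoss (fun x => {_y : 𝒴 | x ∈ B}) (μ.prod κ) = (μ Bᶜ).toReal :=
  (Finset.sup'_congr _ rfl fun y _ =>
    congrArg ENNReal.toReal (cond_prod_snd_eq_apply μ κ (hκ y) hB.compl)).trans
    (Finset.sup'_const _ _)

end Labels

lemma exists_shatters_recallLoss (ι : Type*) [Finite ι] {X 𝒴 : Type*} [Preorder X]
    [MeasurableSpace X] [Fintype 𝒴] [Nonempty 𝒴] [MeasurableSpace 𝒴]
    (hIcc : ∀ l u : X, MeasurableSet (Icc l u)) (e : ℕ ↪o X) {γ : ℝ} (hγ : γ ∈ Ioo 0 1) :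
    ∃ P : ι → Measure (X × 𝒴), (∀ i, IsProbabilityMeasure (P i)) ∧
      (∀ i y, 0 < P i {p | p.2 = y}) ∧
      Shatters (fun I : X × X => recallLoss fun x => {_y : 𝒴 | x ∈ Icc I.1 I.2}) γ P := by
  have hγ' : ENNReal.ofReal γ ∈ Ioo 0 1 := ⟨ENNReal.ofReal_pos.2 hγ.1, ENNReal.ofReal_lt_one.2 hγ.2⟩
  obtain ⟨μ, hμ, hsh⟩ := exists_shatters_missProb ι hIcc e hγ'
  obtain ⟨κ, hκ, hκ_pos⟩ := exists_probabilityMeasure_singleton_pos 𝒴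
  refine ⟨fun i => (μ i).prod κ, fun i => inferInstance, fun i y => ?_,
    hsh.transfer id fun I i => ?_⟩
  · rw [prod_apply_snd_eq]
    exact hκ_pos y
  · rw [id, recallLoss_prod_of_forall_label _ _ (fun y => (hκ_pos y).ne') (hIcc _ _),
      ← ENNReal.ofReal_le_iff_le_toReal (measure_ne_top _ _), missProb]

theorem rectangular_shatter_general {X 𝒴 : Type*} [Preorder X] [MeasurableSpace X] [Fintype 𝒴]
    [Nonempty 𝒴] [MeasurableSpace 𝒴] (hIcc : ∀ l u : X, MeasurableSet (Icc l u)) (e : ℕ ↪o X)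
    {γ : ℝ} (hγ : γ ∈ Ioo 0 1) (n : ℕ) :
    ∃ C : Finset (Measure (X × 𝒴)),
      C.card = n ∧
      (∀ P ∈ C, IsProbabilityMeasure P) ∧
      (∀ P ∈ C, ∀ y : 𝒴, 0 < P {p | p.2 = y}) ∧
      ∀ C' ⊆ C, ∃ l u : X,
        (∀ P ∈ C', γ ≤ recallLoss (fun x => {_y : 𝒴 | x ∈ Icc l u}) P) ∧
        ∀ P ∈ C, P ∉ C' → recallLoss (fun x => {_y : 𝒴 | x ∈ Icc l u}) P < γ := by
  obtain ⟨P, hP, hP_pos, hsh⟩ := exists_shatters_recallLoss (Fin n) (𝒴 := 𝒴) hIcc e hγ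
  let C := Finset.univ.map ⟨P, hsh.injective⟩
  have hC (Q) : Q ∈ C ↔ Q ∈ range P := by simp [C]
  refine ⟨C, by simp [C], by simpa [hC] using hP, by simpa [hC] using hP_pos, fun C' hC' => ?_⟩
  obtain ⟨⟨l, u⟩, h_le, h_lt⟩ := hsh.exists_forall_mem_le_forall_notMem_lt
    (C := C') fun Q hQ => (hC Q).1 (hC' hQ)
  exact ⟨l, u, h_le, fun Q hQ => h_lt Q ((hC Q).1 hQ)⟩

/-- The diagonal copy of `ℕ` in `ℝ^ι`, along which the shattered measures on `ℕ` are transported. -/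
def natDiagonal (ι : Type*) [Nonempty ι] : ℕ ↪o (ι → ℝ) :=
  OrderEmbedding.ofMapLEIff (fun n _ => n) fun m n => by simp [Pi.le_def]

/-- For every `d ≥ 1`, `γ ∈ (0,1)` and `n`, the class of rectangular set-valued
predictors on `ℝ^d` (each `h_y` the indicator of an axis-aligned closed box) shatters some set of
`n` domains with respect to the recall loss and `γ`. -/
theorem rectangular_shatter
    {𝒴 : Type*} [Fintype 𝒴] [Nonempty 𝒴] [MeasurableSpace 𝒴]
    (d : ℕ) (hd : 1 ≤ d)
    (γ : ℝ) (hγ : γ ∈ Set.Ioo (0 : ℝ) 1) (n : ℕ) :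
    ∃ C : Finset (Measure ((Fin d → ℝ) × 𝒴)),
      C.card = n ∧
      (∀ P ∈ C, IsProbabilityMeasure P) ∧
      (∀ P ∈ C, ∀ y : 𝒴, 0 < P {p : (Fin d → ℝ) × 𝒴 | p.2 = y}) ∧
      -- `C` is shattered by the rectangular class w.r.t. `L_recall`, `γ`
      (∀ C' : Finset (Measure ((Fin d → ℝ) × 𝒴)), C' ⊆ C →
        ∃ l u : 𝒴 → (Fin d → ℝ),
          (∀ P ∈ C',
            γ ≤ recallLoss (fun x : Fin d → ℝ => {y : 𝒴 | x ∈ Set.Icc (l y) (u y)}) P) ∧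
          (∀ P ∈ C, P ∉ C' →
            recallLoss (fun x : Fin d → ℝ => {y : 𝒴 | x ∈ Set.Icc (l y) (u y)}) P < γ)) := by
  have : Nonempty (Fin d) := ⟨⟨0, hd⟩⟩
  obtain ⟨C, h_card, h_prob, h_pos, h_shatter⟩ := rectangular_shatter_general (𝒴 := 𝒴)
    (fun _ _ => measurableSet_Icc) (natDiagonal (Fin d)) hγ n
  refine ⟨C, h_card, h_prob, h_pos, fun C' hC' => ?_⟩
  obtain ⟨l, u, h⟩ := h_shatter C' hC'
  exact ⟨fun _ => l, fun _ => u, h⟩
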